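/- arXiv:math/0403530 — 3 statements merged into one kernel-verified Lean document; each statement's English description precedes it below -/
import Mathlib

section
/- Let R = Z[x_1,...,x_n]/J, where J = ⟨e_1(x_1,...,x_n), ..., e_n(x_1,...,x_n)⟩. Every degree-one element f of R has nilpotence order at least n (i.e., f^{n-1} ≠ 0 unless f = 0), and f satisfies f^n = 0 if and only if f is an integer scalar multiple of the image of one of the variables x_1,...,x_n. -/
open MvPolynomial Finset

/-- The set of the first `j` variables among `x_0, ..., x_{n-1}`. -/
def fv (n j : ℕ) : Finset (Fin n) := Finset.univ.filter (fun i => (i : ℕ) < j)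

/-- Complete homogeneous symmetric polynomial of degree `m` in the variables indexed by `S`. -/
noncomputable def hh (R : Type*) [CommRing R] (n m : ℕ) (S : Finset (Fin n)) :
    MvPolynomial (Fin n) R :=
  ∑ s ∈ S.sym m, ((s : Multiset (Fin n)).map (X : Fin n → MvPolynomial (Fin n) R)).prod

/-- Elementary symmetric polynomial of degree `m` in the variables indexed by `S`. -/
noncomputable def ee (R : Type*) [CommRing R] (n m : ℕ) (S : Finset (Fin n)) :
    MvPolynomial (Fin n) R :=
  ∑ s ∈ S.powersetCard m, ∏ i ∈ s, X i

lemma aux_scale {A : Type*} [CommRing A] [Algebra ℤ A] (n k : ℕ) (v : Fin n → A) (c : A) :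
    aeval (fun i => c * v i) (esymm (Fin n) ℤ k) = c ^ k * aeval v (esymm (Fin n) ℤ k) := by
  simp only [esymm, map_sum, map_prod, aeval_X, Finset.mul_sum]
  refine Finset.sum_congr rfl fun s hs => ?_
  rw [Finset.prod_mul_distrib, Finset.prod_const, (Finset.mem_powersetCard.1 hs).2]

lemma aux_perm {A : Type*} [CommRing A] [Algebra ℤ A] (n k : ℕ) (v : Fin n → A) (σ : Equiv.Perm (Fin n)) :
    aeval (fun i => v (σ i)) (esymm (Fin n) ℤ k) = aeval v (esymm (Fin n) ℤ k) := by
  conv_rhs => rw [← esymm_isSymmetric (Fin n) ℤ k σ]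
  rw [aeval_rename]
  rfl

lemma aux_root (n k : ℕ) (ζ : ℂ) (hζ : IsPrimitiveRoot ζ n) (hk : 0 < k) (hkn : k < n) :
    aeval (fun i : Fin n => ζ ^ (i : ℕ)) (esymm (Fin n) ℤ k) = 0 := by
  obtain ⟨m, rfl⟩ : ∃ m, n = m + 1 := ⟨n - 1, by omega⟩
  have h1 := aux_scale (m + 1) k (fun i : Fin (m + 1) => ζ ^ (i : ℕ)) ζ
  have h2 := aux_perm (m + 1) k (fun i : Fin (m + 1) => ζ ^ (i : ℕ)) (finRotate (m + 1))
  have h3 : (fun i : Fin (m + 1) => ζ ^ ((finRotate (m + 1) i : Fin (m + 1)) : ℕ)) =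
      fun i : Fin (m + 1) => ζ * ζ ^ (i : ℕ) := by
    funext i
    rw [← pow_succ']
    rw [coe_finRotate]
    split_ifs with h
    · subst h
      simp [hζ.pow_eq_one]
    · rfl
  rw [h3, h1] at h2
  have h4 : ζ ^ k ≠ 1 := hζ.pow_ne_one_of_pos_of_lt hk.ne' hkn
  have h5 : (ζ ^ k - 1) * aeval (fun i : Fin (m + 1) => ζ ^ (i : ℕ))
      (esymm (Fin (m + 1)) ℤ k) = 0 := by
    rw [sub_mul, h2]; ring
  exact (mul_eq_zero.1 h5).resolve_left (sub_ne_zero.2 h4)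

noncomputable def phi {n : ℕ} (v : Fin n → ℂ) : MvPolynomial (Fin n) ℤ →ₐ[ℤ] Polynomial ℂ :=
  aeval (fun i => Polynomial.X * Polynomial.C (v i))

lemma phi_esymm {n : ℕ} (v : Fin n → ℂ) (k : ℕ) :
    phi v (esymm (Fin n) ℤ k) =
      Polynomial.X ^ k * Polynomial.C (aeval v (esymm (Fin n) ℤ k)) := by
  rw [phi, aux_scale n k (fun i => Polynomial.C (v i)) Polynomial.X]
  congr 1
  simp [esymm, map_sum, map_prod]

lemma phi_coeff_zero {n : ℕ} (v : Fin n → ℂ) (p : MvPolynomial (Fin n) ℤ) :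
    (phi v p).coeff 0 = ((constantCoeff p : ℤ) : ℂ) := by
  induction p using MvPolynomial.induction_on with
  | C a => simp [phi]
  | add p q hp hq => simp [hp, hq]
  | mul_X p i hp => simp [phi, Polynomial.mul_coeff_zero]

lemma phi_lin {n : ℕ} (v : Fin n → ℂ) (a : Fin n → ℤ) :
    phi v (∑ i, C (a i) * X i) = Polynomial.C (∑ i, (a i : ℂ) * v i) * Polynomial.X := by
  simp only [phi, map_sum, map_mul, aeval_X, Finset.sum_mul]
  refine Finset.sum_congr rfl fun i _ => ?_
  simp
  ring

lemma key {n : ℕ} (ζ : ℂ) (hζ : IsPrimitiveRoot ζ n) (p : MvPolynomial (Fin n) ℤ)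
    (hp : p ∈ Ideal.span (Set.range fun i : Fin n => esymm (Fin n) ℤ ((i : ℕ) + 1))) :
    ∃ c : ℂ, ∀ σ : Equiv.Perm (Fin n),
      Polynomial.X ^ n ∣ phi (fun i => ζ ^ ((σ i : Fin n) : ℕ)) p ∧
      (phi (fun i => ζ ^ ((σ i : Fin n) : ℕ)) p).coeff n = c := by
  induction hp using Submodule.span_induction with
  | mem x hx =>
    obtain ⟨i, rfl⟩ := hx
    simp only [phi_esymm]
    refine ⟨(Polynomial.X ^ ((i : ℕ) + 1) * Polynomial.C (aeval (fun i : Fin n => ζ ^ (i : ℕ))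
      (esymm (Fin n) ℤ ((i : ℕ) + 1)))).coeff n, fun σ => ?_⟩
    rw [aux_perm n _ (fun i : Fin n => ζ ^ (i : ℕ)) σ]
    refine ⟨?_, rfl⟩
    by_cases h : (i : ℕ) + 1 = n
    · rw [h]; exact dvd_mul_right _ _
    · rw [aux_root n _ ζ hζ (by omega) (by omega)]; simp
  | zero => exact ⟨0, by simp⟩
  | add x y _ _ hx hy =>
    obtain ⟨c, hc⟩ := hx
    obtain ⟨d, hd⟩ := hy
    refine ⟨c + d, fun σ => ?_⟩
    rw [map_add, Polynomial.coeff_add, (hc σ).2, (hd σ).2]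
    exact ⟨dvd_add (hc σ).1 (hd σ).1, rfl⟩
  | smul r x _ hx =>
    obtain ⟨c, hc⟩ := hx
    refine ⟨((constantCoeff r : ℤ) : ℂ) * c, fun σ => ?_⟩
    rw [smul_eq_mul, map_mul]
    refine ⟨(hc σ).1.mul_left _, ?_⟩
    rw [← (hc σ).2, ← phi_coeff_zero (fun i => ζ ^ ((σ i : Fin n) : ℕ)) r]
    obtain ⟨q, hq⟩ := (hc σ).1
    rw [hq, mul_left_comm, Polynomial.coeff_X_pow_mul', Polynomial.coeff_X_pow_mul']
    simp [Polynomial.mul_coeff_zero]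

/-- the linear form -/
noncomputable def LL {n : ℕ} (ζ : ℂ) (a : Fin n → ℤ) (σ : Equiv.Perm (Fin n)) : ℂ :=
  ∑ i, (a i : ℂ) * ζ ^ ((σ i : Fin n) : ℕ)

lemma LL_swap {n : ℕ} (ζ : ℂ) (a : Fin n → ℤ) (σ : Equiv.Perm (Fin n)) (i j : Fin n) :
    LL ζ a (σ * Equiv.swap i j) = LL ζ a σ -
      ((a i : ℂ) - a j) * (ζ ^ ((σ i : Fin n) : ℕ) - ζ ^ ((σ j : Fin n) : ℕ)) := by
  by_cases hij : i = j
  · subst hij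
    rw [Equiv.swap_self]
    simp only [sub_self, mul_zero, sub_zero]
    rfl
  have h1 : LL ζ a (σ * Equiv.swap i j) =
      ∑ k, (a (Equiv.swap i j k) : ℂ) * ζ ^ ((σ k : Fin n) : ℕ) := by
    rw [LL, ← Equiv.sum_comp (Equiv.swap i j)]
    simp
  have h2 : LL ζ a σ - LL ζ a (σ * Equiv.swap i j) =
      ((a i : ℂ) - a j) * (ζ ^ ((σ i : Fin n) : ℕ) - ζ ^ ((σ j : Fin n) : ℕ)) := by
    rw [h1, LL, ← Finset.sum_sub_distrib, Finset.sum_eq_add i j hij]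
    · rw [Equiv.swap_apply_left, Equiv.swap_apply_right]; ring
    · intro k _ hk
      rw [Equiv.swap_apply_of_ne_of_ne hk.1 hk.2, sub_self]
    · simp
    · simp
  rw [← h2]; ring

lemma LL_pow1 {n : ℕ} (hn : 2 ≤ n) (ζ : ℂ) (hζ : IsPrimitiveRoot ζ n) (a : Fin n → ℤ)
    (h : (∑ i, C (a i) * X i) ^ (n - 1) ∈
      Ideal.span (Set.range fun i : Fin n => esymm (Fin n) ℤ ((i : ℕ) + 1)))
    (σ : Equiv.Perm (Fin n)) : LL ζ a σ = 0 := by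
  obtain ⟨c, hc⟩ := key ζ hζ _ h
  have h1 := (hc σ).1
  rw [map_pow, phi_lin, mul_pow, ← Polynomial.C_pow, Polynomial.X_pow_dvd_iff] at h1
  have := h1 (n - 1) (by omega)
  rw [Polynomial.coeff_C_mul, Polynomial.coeff_X_pow_self, mul_one] at this
  exact eq_zero_of_pow_eq_zero this

lemma LL_pow {n : ℕ} (ζ : ℂ) (hζ : IsPrimitiveRoot ζ n) (a : Fin n → ℤ)
    (h : (∑ i, C (a i) * X i) ^ n ∈
      Ideal.span (Set.range fun i : Fin n => esymm (Fin n) ℤ ((i : ℕ) + 1)))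
    (σ τ : Equiv.Perm (Fin n)) : LL ζ a σ ^ n = LL ζ a τ ^ n := by
  obtain ⟨c, hc⟩ := key ζ hζ _ h
  have h1 : ∀ σ, LL ζ a σ ^ n = c := by
    intro σ
    have h1 := (hc σ).2
    rwa [map_pow, phi_lin, mul_pow, ← Polynomial.C_pow, Polynomial.coeff_C_mul,
      Polynomial.coeff_X_pow_self, mul_one] at h1
  rw [h1, h1]

lemma all_eq {n : ℕ} (hn : 2 ≤ n) (ζ : ℂ) (hζ : IsPrimitiveRoot ζ n) (a : Fin n → ℤ)
    (h : ∀ σ, LL ζ a σ = 0) (i j : Fin n) : a i = a j := by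
  by_contra hne
  have hij : i ≠ j := fun h => hne (by rw [h])
  have h1 := LL_swap ζ a 1 i j
  rw [h, h, zero_sub, zero_eq_neg, mul_eq_zero] at h1
  rcases h1 with h1 | h1
  · exact hne (by exact_mod_cast sub_eq_zero.1 h1)
  · exact hij (Fin.ext (hζ.pow_inj i.2 j.2 (sub_eq_zero.1 h1)))

lemma exists_perm4 {n : ℕ} (hn : 4 ≤ n) (i j k l : Fin n) (hij : i ≠ j) (hik : i ≠ k)
    (hil : i ≠ l) (hjk : j ≠ k) (hjl : j ≠ l) (hkl : k ≠ l) :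
    ∃ σ : Equiv.Perm (Fin n), ((σ i : Fin n) : ℕ) = 0 ∧ ((σ j : Fin n) : ℕ) = 3 ∧
      ((σ k : Fin n) : ℕ) = 1 ∧ ((σ l : Fin n) : ℕ) = 2 := by
  have hf : Function.Injective ![i, j, k, l] := by
    intro x y
    fin_cases x <;> fin_cases y <;> simp_all [eq_comm]
  have hg : Function.Injective
      ![(⟨0, by omega⟩ : Fin n), ⟨3, by omega⟩, ⟨1, by omega⟩, ⟨2, by omega⟩] := by
    intro x y
    fin_cases x <;> fin_cases y <;> simp
  obtain ⟨σ, hσ⟩ := Equiv.Perm.exists_extending_pair _ _ hf hg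
  have h0 := hσ 0
  have h1 := hσ 1
  have h2 := hσ 2
  have h3 := hσ 3
  simp at h0 h1 h2 h3
  refine ⟨σ, ?_, ?_, ?_, ?_⟩ <;> simp [*]

lemma four {n : ℕ} (hn : 4 ≤ n) (ζ : ℂ) (hζ : IsPrimitiveRoot ζ n) (a : Fin n → ℤ)
    (h : ∀ σ τ, LL ζ a σ ^ n = LL ζ a τ ^ n) (i j k l : Fin n) (hij : i ≠ j) (hik : i ≠ k)
    (hil : i ≠ l) (hjk : j ≠ k) (hjl : j ≠ l) (hkl : k ≠ l) : a i = a j ∨ a k = a l := by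
  obtain ⟨σ, h0, h3, h1, h2⟩ := exists_perm4 hn i j k l hij hik hil hjk hjl hkl
  have hN : ∀ σ τ, Complex.normSq (LL ζ a σ) = Complex.normSq (LL ζ a τ) := by
    intro σ τ
    have := congrArg norm (h σ τ)
    rw [norm_pow, norm_pow] at this
    have := (pow_left_inj₀ (norm_nonneg _) (norm_nonneg _) (by omega)).1 this
    rw [Complex.normSq_eq_norm_sq, Complex.normSq_eq_norm_sq, this]
  have e1 := LL_swap ζ a σ i j
  have e2 := LL_swap ζ a σ k l
  have e3 := LL_swap ζ a (σ * Equiv.swap i j) k l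
  simp only [Equiv.Perm.mul_apply, Equiv.swap_apply_of_ne_of_ne hik.symm hjk.symm,
    Equiv.swap_apply_of_ne_of_ne hil.symm hjl.symm] at e3
  rw [h0, h3] at e1
  rw [h1, h2] at e2 e3
  rw [e1] at e3
  have n1 := hN (σ * Equiv.swap i j) σ
  have n2 := hN (σ * Equiv.swap k l) σ
  have n3 := hN (σ * Equiv.swap i j * Equiv.swap k l) σ
  rw [e1] at n1
  rw [e2] at n2
  rw [e3] at n3
  set z := LL ζ a σ
  have hs : ζ ^ 0 - ζ ^ 3 = ((1 + 2 * ζ.re : ℝ) : ℂ) * (ζ ^ 1 - ζ ^ 2) := by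
    have hc : ζ * (starRingEnd ℂ) ζ = 1 := by
      rw [Complex.mul_conj, Complex.normSq_eq_norm_sq, hζ.norm'_eq_one (by omega)]; simp
    have hr : (2 * ζ.re : ℂ) = ζ + (starRingEnd ℂ) ζ := by
      rw [Complex.add_conj]; simp
    push_cast
    rw [hr]
    linear_combination (ζ - 1) * hc
  set w := ζ ^ 1 - ζ ^ 2
  set s := 1 + 2 * ζ.re
  rw [hs] at n1 n3
  have hsw : ((s : ℝ) : ℂ) * w ≠ 0 := by
    rw [← hs, sub_ne_zero]
    intro he
    have := hζ.pow_inj (by omega) (by omega) he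
    omega
  have hs0 : s ≠ 0 := by
    intro h; apply hsw; rw [h]; simp
  have hw0 : w ≠ 0 := fun h => hsw (by rw [h, mul_zero])
  have hm : Complex.normSq w ≠ 0 := by simpa using hw0
  have hfin : ((a i : ℝ) - a j) * ((a k : ℝ) - a l) * (s * Complex.normSq w) = 0 := by
    simp only [Complex.normSq_apply, Complex.sub_re, Complex.sub_im, Complex.mul_re,
      Complex.mul_im, Complex.ofReal_re, Complex.ofReal_im, Complex.intCast_re,
      Complex.intCast_im] at n1 n2 n3 ⊢
    linear_combination (n3 - n1 - n2) / 2
  rcases mul_eq_zero.1 hfin with h | h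
  · rcases mul_eq_zero.1 h with h | h
    · left; exact_mod_cast sub_eq_zero.1 h
    · right; exact_mod_cast sub_eq_zero.1 h
  · exact absurd h (mul_ne_zero hs0 hm)

lemma three (ζ : ℂ) (hζ : IsPrimitiveRoot ζ 3) (a : Fin 3 → ℤ)
    (h : ∀ σ τ, LL ζ a σ ^ 3 = LL ζ a τ ^ 3) : a 0 = a 1 ∨ a 1 = a 2 ∨ a 0 = a 2 := by
  have e := LL_swap ζ a 1 1 2
  have hh := h (1 * Equiv.swap 1 2) 1
  rw [e] at hh
  simp [LL, Fin.sum_univ_three] at hh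
  have hne : ζ ≠ 1 := hζ.ne_one (by norm_num)
  have h3 := hζ.pow_eq_one
  have hz : 1 + ζ + ζ ^ 2 = 0 := by
    have : (ζ - 1) * (1 + ζ + ζ ^ 2) = 0 := by linear_combination h3
    exact (mul_eq_zero.1 this).resolve_left (sub_ne_zero.2 hne)
  have hx : ((a 0 : ℂ) - a 1) * ((a 1 - a 2) * (a 0 - a 2)) * (ζ - ζ ^ 2) ^ 1 * 3 = 0 := by
    obtain ⟨L, hL⟩ : ∃ L, L = (a 0 : ℂ) + a 1 * ζ + a 2 * ζ ^ 2 := ⟨_, rfl⟩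
    obtain ⟨M, hM⟩ : ∃ M, M = (a 0 : ℂ) + a 1 * ζ ^ 2 + a 2 * ζ := ⟨_, rfl⟩
    have hML : M ^ 3 = L ^ 3 := by
      rw [hL, ← hh, hM]; ring
    have f1 : M - L = -((a 1 : ℂ) - a 2) * (ζ - ζ ^ 2) := by rw [hM, hL]; ring
    have f2 : M - ζ * L = ((a 0 : ℂ) - a 2) * (1 - ζ) := by
      rw [hM, hL]; linear_combination -(a 2 : ℂ) * h3
    have f3 : M - ζ ^ 2 * L = ((a 0 : ℂ) - a 1) * (1 - ζ ^ 2) := by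
      rw [hM, hL]; linear_combination (-(a 1 : ℂ) - a 2 * ζ) * h3
    have f4 : (M - L) * ((M - ζ * L) * (M - ζ ^ 2 * L)) = 0 := by
      linear_combination hML + (-M ^ 2 * L + M * L ^ 2 * ζ) * hz - L ^ 3 * h3
    rw [f1, f2, f3] at f4
    have f5 : (1 - ζ) * (1 - ζ ^ 2) = 3 := by linear_combination h3 - hz
    rw [← f5]
    linear_combination -f4
  have hζ0 : ζ - ζ ^ 2 ≠ 0 := by
    have : ζ ≠ 0 := hζ.ne_zero (by norm_num)
    have : ζ * (1 - ζ) ≠ 0 := mul_ne_zero this (sub_ne_zero.2 hne.symm)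
    intro h; apply this; rw [← h]; ring
  simp [hζ0, sub_eq_zero] at hx
  exact_mod_cast hx

lemma main_comb {n : ℕ} (hn : 1 ≤ n) (a : Fin n → ℤ)
    (h : (∑ i, C (a i) * X i) ^ n ∈
      Ideal.span (Set.range fun i : Fin n => esymm (Fin n) ℤ ((i : ℕ) + 1))) :
    ∃ i, ∃ c, ∀ j, j ≠ i → a j = c := by
  have hζ := Complex.isPrimitiveRoot_exp n (by omega)
  have hL := LL_pow _ hζ a h
  generalize Complex.exp (2 * Real.pi * Complex.I / n) = ζ at hζ hL
  by_cases h4 : 4 ≤ n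
  · have H := four h4 ζ hζ a hL
    by_cases hall : ∀ i j, a i = a j
    · exact ⟨⟨0, by omega⟩, a ⟨0, by omega⟩, fun j _ => hall _ _⟩
    push Not at hall
    obtain ⟨i, j, hij⟩ := hall
    have hij' : i ≠ j := fun h => hij (by rw [h])
    -- all others are equal
    have H1 : ∀ k l, k ≠ i → k ≠ j → l ≠ i → l ≠ j → a k = a l := by
      intro k l h1 h2 h3 h4
      by_cases hkl : k = l
      · rw [hkl]
      exact (H i j k l hij' h1.symm h3.symm h2.symm h4.symm hkl).resolve_left hij
    have hc : 1 < (({i, j} : Finset (Fin n))ᶜ).card := by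
      rw [Finset.card_compl, Fintype.card_fin, Finset.card_pair hij']; omega
    obtain ⟨k, hk, l, hl, hkl⟩ := Finset.one_lt_card.1 hc
    simp at hk hl
    have hkl' := H1 k l hk.1 hk.2 hl.1 hl.2
    rcases H i k j l (Ne.symm hk.1) hij' (Ne.symm hl.1) hk.2 hkl (Ne.symm hl.2) with h | h
    · refine ⟨j, a k, fun m hm => ?_⟩
      by_cases hmi : m = i
      · rw [hmi, h]
      · exact H1 m k hmi hm hk.1 hk.2
    · refine ⟨i, a k, fun m hm => ?_⟩
      by_cases hmi : m = j
      · rw [hmi, h, hkl']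
      · exact H1 m k hm hmi hk.1 hk.2
  · interval_cases n
    · exact ⟨0, 0, fun j hj => absurd (Subsingleton.elim _ _) hj⟩
    · refine ⟨0, a 1, fun j hj => ?_⟩
      fin_cases j <;> simp_all
    · rcases three ζ hζ a hL with h | h | h
      · refine ⟨2, a 0, fun j hj => ?_⟩
        fin_cases j <;> simp_all
      · refine ⟨0, a 1, fun j hj => ?_⟩
        fin_cases j <;> simp_all
      · refine ⟨1, a 0, fun j hj => ?_⟩
        fin_cases j <;> simp_all

lemma esymm_quot {n : ℕ} (J : Ideal (MvPolynomial (Fin n) ℤ))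
    (hJ : J = Ideal.span (Set.range fun i : Fin n => esymm (Fin n) ℤ ((i : ℕ) + 1)))
    (k : ℕ) (hk : 0 < k) (hkn : k ≤ n) : esymm (Fin n) ℤ k ∈ J := by
  rw [hJ]
  refine Ideal.subset_span ⟨⟨k - 1, by omega⟩, ?_⟩
  simp only
  congr 1
  omega

lemma var_pow {n : ℕ} (J : Ideal (MvPolynomial (Fin n) ℤ))
    (hJ : J = Ideal.span (Set.range fun i : Fin n => esymm (Fin n) ℤ ((i : ℕ) + 1)))
    (i : Fin n) : (X i : MvPolynomial (Fin n) ℤ) ^ n ∈ J := by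
  have h := MvPolynomial.prod_C_add_X_eq_sum_esymm ℤ (Fin n)
  have h2 := congrArg (Polynomial.eval (-(X i : MvPolynomial (Fin n) ℤ))) h
  rw [Polynomial.eval_prod, Finset.prod_eq_zero (Finset.mem_univ i) (by simp),
    Polynomial.eval_finsetSum, Finset.sum_range_succ'] at h2
  simp only [Fintype.card_fin, Polynomial.eval_mul, Polynomial.eval_C, Polynomial.eval_pow,
    Polynomial.eval_X, esymm_zero, one_mul, Nat.sub_zero] at h2
  have h3 : (-(X i : MvPolynomial (Fin n) ℤ)) ^ n ∈ J := by
    rw [eq_neg_of_add_eq_zero_right h2.symm]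
    refine J.neg_mem (J.sum_mem fun k hk => J.mul_mem_right _ ?_)
    exact esymm_quot J hJ _ (by omega) (by have := Finset.mem_range.1 hk; omega)
  rw [neg_pow] at h3
  have h4 := J.mul_mem_left ((-1) ^ n) h3
  rwa [← mul_assoc, ← mul_pow, neg_one_mul, neg_neg, one_pow, one_mul] at h4

lemma lin_eq {n : ℕ} (hn : 1 ≤ n) (J : Ideal (MvPolynomial (Fin n) ℤ))
    (hJ : J = Ideal.span (Set.range fun i : Fin n => esymm (Fin n) ℤ ((i : ℕ) + 1)))
    (a : Fin n → ℤ) (i : Fin n) (c : ℤ) (h : ∀ j, j ≠ i → a j = c) :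
    Ideal.Quotient.mk J (∑ i, C (a i) * X i) = (a i - c) • Ideal.Quotient.mk J (X i) := by
  have h1 := esymm_quot J hJ 1 (by omega) hn
  rw [esymm_one] at h1
  rw [← map_zsmul, Ideal.Quotient.eq]
  have : (∑ i, C (a i) * X i) - (a i - c) • (X i : MvPolynomial (Fin n) ℤ) =
      C c * ∑ i, X i := by
    rw [Finset.mul_sum, ← Finset.add_sum_erase _ _ (Finset.mem_univ i),
      ← Finset.add_sum_erase _ _ (Finset.mem_univ i),
      Finset.sum_congr rfl (fun j hj => by rw [h j (Finset.ne_of_mem_erase hj)])]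
    simp [zsmul_eq_mul]
    ring
  rw [this]
  exact J.mul_mem_left _ h1

/-- in `R = ℤ[x_1,...,x_n]/⟨e_1,...,e_n⟩`, every degree-one element `f` has
nilpotence order at least `n` (`f^{n-1} ≠ 0` unless `f = 0`), and `f^n = 0` iff `f` is an
integer multiple of the image of one of the variables. -/
theorem stmt10 (n : ℕ) (a : Fin n → ℤ)
    (J : Ideal (MvPolynomial (Fin n) ℤ))
    (hJ : J = Ideal.span (Set.range fun i : Fin n => esymm (Fin n) ℤ ((i : ℕ) + 1))) :
    ((Ideal.Quotient.mk J (∑ i, C (a i) * X i)) ^ (n - 1) = 0 →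
      Ideal.Quotient.mk J (∑ i, C (a i) * X i) = 0) ∧
    ((Ideal.Quotient.mk J (∑ i, C (a i) * X i)) ^ n = 0 ↔
      ∃ i : Fin n, ∃ c : ℤ,
        Ideal.Quotient.mk J (∑ i, C (a i) * X i) = c • Ideal.Quotient.mk J (X i)) := by
  have hmem : ∀ m, (Ideal.Quotient.mk J (∑ i, C (a i) * X i)) ^ m = 0 ↔
      (∑ i, C (a i) * X i) ^ m ∈
      Ideal.span (Set.range fun i : Fin n => esymm (Fin n) ℤ ((i : ℕ) + 1)) := by
    intro m
    rw [← map_pow, Ideal.Quotient.eq_zero_iff_mem, hJ]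
  have hnt : (Ideal.Quotient.mk J (∑ i, C (a i) * X i)) ^ 0 = 0 → n = 0 → False := by
    rintro h rfl
    rw [hmem] at h
    simp [Set.range_eq_empty] at h
  refine ⟨fun h => ?_, fun h => ?_, ?_⟩
  · rcases Nat.lt_or_ge n 2 with hn | hn
    · interval_cases n
      · simp
      · have := lin_eq le_rfl J hJ a 0 (a 0) (fun j _ => by rw [Subsingleton.elim j 0])
        simpa using this
    · have hζ := Complex.isPrimitiveRoot_exp n (by omega)
      have hall := all_eq hn _ hζ a (LL_pow1 hn _ hζ a ((hmem _).1 h))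
      have := lin_eq (by omega) J hJ a ⟨0, by omega⟩ (a ⟨0, by omega⟩) (fun j _ => hall _ _)
      simpa using this
  · rcases Nat.eq_zero_or_pos n with hn | hn
    · exact (hnt (by simpa only [hn] using h) hn).elim
    obtain ⟨i, c, hc⟩ := main_comb hn a ((hmem _).1 h)
    exact ⟨i, a i - c, lin_eq hn J hJ a i c hc⟩
  · rintro ⟨i, c, hc⟩
    rw [hc, smul_pow, ← map_pow, Ideal.Quotient.eq_zero_iff_mem.2 (var_pow J hJ i), smul_zero]
end

section
/- Let λ be a partition with λ_1 = k and λ_i ≥ i+1 for all i (indecomposability), and let i ≤ n with p := λ_i. Then in R^λ = Z[x_1,...,x_n]/I_λ, the image of x_i satisfies x_i^p = 0 but x_i^{p-1} ≠ 0; that is, x_i has nilpotence order exactly λ_i. -/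
open MvPolynomial Finset

/-- complete homogeneous polynomials of the values `x 0, ..., x (j-1)` -/
def HC {A : Type*} [CommRing A] (x : ℕ → A) : ℕ → ℕ → A
  | 0, 0 => 1
  | 0, _ + 1 => 0
  | _ + 1, 0 => 1
  | j + 1, m + 1 => x j * HC x (j + 1) m + HC x j (m + 1)

lemma HC_z {A : Type*} [CommRing A] (x : ℕ → A) (j : ℕ) : HC x j 0 = 1 := by
  cases j <;> simp [HC]

lemma HC_s {A : Type*} [CommRing A] (x : ℕ → A) (j m : ℕ) :
    HC x (j+1) (m+1) = x j * HC x (j + 1) m + HC x j (m + 1) := by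
  simp [HC]

lemma HC_map {A B : Type*} [CommRing A] [CommRing B] (f : A →+* B) (x : ℕ → A) (y : ℕ → B)
    (j : ℕ) (h : ∀ k < j, y k = f (x k)) (m : ℕ) : HC y j m = f (HC x j m) := by
  induction j generalizing m with
  | zero => cases m <;> simp [HC]
  | succ j ih =>
    induction m with
    | zero => simp [HC]
    | succ m ihm =>
      rw [HC_s, HC_s, ihm, ih (fun k hk => h k (by omega)), h j (by omega)]
      simp

lemma hh_insert (n m : ℕ) (a : Fin n) (S : Finset (Fin n)) (ha : a ∉ S) :
    hh ℤ n (m+1) (insert a S) = X a * hh ℤ n m (insert a S) + hh ℤ n (m+1) S := by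
  unfold hh
  rw [← Finset.sum_filter_add_sum_filter_not _ (fun s => a ∈ s)]
  congr 1
  · rw [Finset.mul_sum]
    symm
    apply Finset.sum_nbij (fun s => a ::ₛ s)
    · intro s hs
      simp only [Finset.mem_filter, Finset.mem_sym_iff, Sym.mem_cons] at hs ⊢
      grind
    · intro s _ t _ h
      simpa using h
    · intro s hs
      simp only [Finset.coe_filter, Finset.mem_sym_iff, Set.mem_ofPred_eq] at hs
      refine ⟨s.erase a hs.2, ?_, by simp⟩
      simp only [Finset.mem_coe, Finset.mem_sym_iff]
      intro b hb
      exact hs.1 b (Multiset.mem_of_mem_erase hb)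
    · intro s _
      rw [Sym.coe_cons, Multiset.map_cons, Multiset.prod_cons]
  · apply Finset.sum_congr _ (fun _ _ => rfl)
    ext s
    simp only [Finset.mem_filter, Finset.mem_sym_iff]
    grind

lemma hh_zero (n : ℕ) (S : Finset (Fin n)) : hh ℤ n 0 S = 1 := by
  unfold hh
  rw [Finset.sym_zero, Finset.sum_singleton]
  exact Multiset.prod_zero

lemma hh_aeval {A : Type*} [CommRing A] (n : ℕ) (f : MvPolynomial (Fin n) ℤ →+* A) (x : ℕ → A)
    (hx : ∀ k : Fin n, f (X k) = x k) (j : ℕ) (hj : j ≤ n) (m : ℕ) :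
    f (hh ℤ n m (fv n j)) = HC x j m := by
  induction j generalizing m with
  | zero =>
    have : fv n 0 = ∅ := by ext; simp [fv]
    rw [this]
    cases m with
    | zero => simp [hh_zero, HC]
    | succ m => simp [hh, HC]
  | succ j ih =>
    have e : fv n (j+1) = insert ⟨j, by omega⟩ (fv n j) := by
      ext k; simp [fv, Fin.ext_iff]; omega
    induction m with
    | zero => simp [hh_zero, HC]
    | succ m ihm =>
      rw [HC_s, ← ihm, e, hh_insert _ _ _ _ (by simp [fv]), ← ih (by omega), map_add, map_mul, hx]

lemma HC_vanish {A : Type*} [CommRing A] (x : ℕ → A) (d : ℕ → ℕ) (n : ℕ)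
    (hd : ∀ k, k + 1 < n → d k ≤ d (k+1) + 1) (h : ∀ k < n, HC x (k+1) (d k) = 0)
    (k : ℕ) (hk : k < n) (m : ℕ) (hm : d k ≤ m) : HC x (k+1) m = 0 := by
  induction k generalizing m with
  | zero =>
    induction m, hm using Nat.le_induction with
    | base => exact h _ hk
    | succ m hm ih => rw [HC_s, ih]; simp [HC]
  | succ k ihk =>
    induction m, hm using Nat.le_induction with
    | base => exact h _ hk
    | succ m hm ih =>
      rw [HC_s, ih, ihk (by omega) _ (by have := hd k hk; omega)]; simp

/-- product of `1 - x_a t` -/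
noncomputable def PP {A : Type*} [CommRing A] (x : ℕ → A) (j : ℕ) : PowerSeries A :=
  ∏ a ∈ range j, (1 - PowerSeries.C (x a) * PowerSeries.X)

lemma coeff_aux {A : Type*} [CommRing A] (a : A) (f : PowerSeries A) (m : ℕ) :
    PowerSeries.coeff (m+1) (f * (1 - PowerSeries.C a * PowerSeries.X)) =
      PowerSeries.coeff (m+1) f - a * PowerSeries.coeff m f := by
  have : f * (1 - PowerSeries.C a * PowerSeries.X) =
    f - PowerSeries.C a * (f * PowerSeries.X) := by ring
  rw [this, map_sub, PowerSeries.coeff_C_mul, PowerSeries.coeff_succ_mul_X]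

lemma HP {A : Type*} [CommRing A] (x : ℕ → A) (j : ℕ) :
    PowerSeries.mk (HC x j) * PP x j = 1 := by
  induction j with
  | zero =>
    ext m; cases m <;> simp [PP, HC, PowerSeries.coeff_one]
  | succ j ih =>
    have : PowerSeries.mk (HC x (j+1)) * (1 - PowerSeries.C (x j) * PowerSeries.X)
        = PowerSeries.mk (HC x j) := by
      ext m
      cases m with
      | zero => simp [HC_z]
      | succ m => rw [coeff_aux]; simp [HC_s]
    rw [← ih, ← this, PP, PP, prod_range_succ]; ring

lemma HP_pow {A : Type*} [CommRing A] (x : ℕ → A) (i m : ℕ) :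
    PowerSeries.coeff m (PowerSeries.mk (HC x (i+1)) * PP x i) = x i ^ m := by
  have h := HP x (i+1)
  rw [PP, prod_range_succ, ← mul_assoc] at h
  change PowerSeries.mk (HC x (i+1)) * PP x i * _ = 1 at h
  induction m with
  | zero =>
    have := congrArg (PowerSeries.coeff 0) h
    simpa using this
  | succ m ih =>
    have := congrArg (PowerSeries.coeff (m+1)) h
    rw [coeff_aux, ih] at this
    simp only [PowerSeries.coeff_one, Nat.succ_ne_zero, if_false] at this
    rw [pow_succ']
    exact sub_eq_zero.mp (by simpa using this)

lemma HP_top {A : Type*} [CommRing A] (x : ℕ → A) (i d : ℕ)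
    (h : ∀ m, d + 1 ≤ m → HC x (i+1) m = 0) (j : ℕ) :
    (∀ m, d + 1 + j ≤ m →
      PowerSeries.coeff m (PowerSeries.mk (HC x (i+1)) * PP x j) = 0) ∧
    PowerSeries.coeff (d + j) (PowerSeries.mk (HC x (i+1)) * PP x j) =
      (-1) ^ j * ((∏ a ∈ range j, x a) * HC x (i+1) d) := by
  induction j with
  | zero => simpa [PP] using h
  | succ j ih =>
    have e : PowerSeries.mk (HC x (i+1)) * PP x (j+1) =
      PowerSeries.mk (HC x (i+1)) * PP x j * (1 - PowerSeries.C (x j) * PowerSeries.X) := by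
      rw [PP, PP, prod_range_succ]; ring
    rw [e]
    constructor
    · intro m hm
      obtain ⟨m, rfl⟩ : ∃ k, m = k + 1 := ⟨m - 1, by omega⟩
      rw [coeff_aux, ih.1 _ (by omega), ih.1 _ (by omega)]; simp
    · rw [← add_assoc, coeff_aux, ih.1 _ (by omega), ih.2, prod_range_succ]; ring

lemma HC_monic {A : Type*} [CommRing A] [Nontrivial A] (x : ℕ → A) (y : ℕ → Polynomial A) (j : ℕ)
    (hy : ∀ k < j, y k = Polynomial.C (x k)) (hj : y j = Polynomial.X) (m : ℕ) :
    (HC y (j+1) m).Monic ∧ (HC y (j+1) m).degree = m := by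
  induction m with
  | zero => simp [HC_z]
  | succ m ih =>
    rw [HC_s, HC_map Polynomial.C x y j hy, hj]
    have hX : (Polynomial.X * HC y (j+1) m).degree = ((m + 1 : ℕ) : WithBot ℕ) := by
      rw [mul_comm, Polynomial.degree_mul_X, ih.2]; simp
    have hlt : (Polynomial.C (HC x j (m+1))).degree < (Polynomial.X * HC y (j+1) m).degree := by
      rw [hX]
      refine Polynomial.degree_C_le.trans_lt ?_
      exact_mod_cast Nat.succ_pos m
    exact ⟨(Polynomial.monic_X.mul ih.1).add_of_left hlt,
      by rw [Polynomial.degree_add_eq_left_of_degree_lt hlt, hX]⟩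

lemma tower (d : ℕ → ℕ) (hd : ∀ k, 2 ≤ d k) (j : ℕ) :
    ∃ (A : Type) (_ : CommRing A) (x : ℕ → A), (∀ k < j, HC x (k+1) (d k) = 0) ∧
      (∏ a ∈ range j, x a) ≠ 0 ∧
      ∀ k < j, (∏ a ∈ range k, x a) * HC x (k+1) (d k - 1) ≠ 0 := by
  induction j with
  | zero => exact ⟨ℤ, inferInstance, fun _ => 0, by simp, by simp, by simp⟩
  | succ j ih =>
    obtain ⟨A, _, x, h1, h2, h3⟩ := ih
    have : Nontrivial A := ⟨_, _, h2⟩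
    let y : ℕ → Polynomial A := fun k => if k < j then Polynomial.C (x k) else Polynomial.X
    have hy : ∀ k < j, y k = Polynomial.C (x k) := fun k hk => by simp [y, hk]
    have hyj : y j = Polynomial.X := by simp [y]
    have hM := HC_monic x y j hy hyj
    set f := HC y (j+1) (d j) with hf
    have key : ∀ g : Polynomial A, g ≠ 0 → g.degree < d j → AdjoinRoot.mk f g ≠ 0 := by
      intro g hg hdg h0
      rw [AdjoinRoot.mk_eq_zero] at h0
      exact (hM (d j)).1.not_dvd_of_degree_lt hg (by rw [(hM (d j)).2]; exact hdg) h0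
    have hmap : ∀ k m, HC (fun k => AdjoinRoot.mk f (y k)) k m = AdjoinRoot.mk f (HC y k m) :=
      fun k m => HC_map (AdjoinRoot.mk f) y _ k (fun _ _ => rfl) m
    have hC : ∀ k ≤ j, ∀ m, HC y k m = Polynomial.C (HC x k m) :=
      fun k hk m => HC_map Polynomial.C x y k (fun a ha => hy a (by omega)) m
    have hP : ∀ k ≤ j, ∏ a ∈ range k, y a = Polynomial.C (∏ a ∈ range k, x a) := by
      intro k hk
      rw [map_prod]
      exact prod_congr rfl fun a ha => hy a (by have := mem_range.1 ha; omega)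
    have hdj := hd j
    refine ⟨AdjoinRoot f, inferInstance, fun k => AdjoinRoot.mk f (y k), ?_, ?_, ?_⟩
    · intro k hk
      rw [hmap]
      rcases Nat.lt_succ_iff_lt_or_eq.1 hk with hk | rfl
      · rw [hC _ (by omega), h1 k hk]; simp
      · exact AdjoinRoot.mk_self
    · rw [← map_prod, prod_range_succ, hP j le_rfl, hyj]
      apply key
      · intro h
        have := congrArg (Polynomial.coeff · 1) h
        simp only [Polynomial.coeff_C_mul, Polynomial.coeff_X_one, Polynomial.coeff_zero,
          mul_one] at this
        exact h2 this
      · refine (Polynomial.degree_C_mul_X_le _).trans_lt ?_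
        exact_mod_cast hdj
    · intro k hk
      rw [← map_prod, hmap, ← map_mul]
      rcases Nat.lt_succ_iff_lt_or_eq.1 hk with hk | rfl
      · rw [hC _ (by omega), hP k hk.le, ← map_mul]
        apply key
        · exact Polynomial.C_ne_zero.2 (h3 k hk)
        · refine Polynomial.degree_C_le.trans_lt ?_
          exact_mod_cast (by omega : 0 < d j)
      · rw [hP k le_rfl]
        have hm := hM (d k - 1)
        apply key
        · intro h
          have := congrArg (Polynomial.coeff · (d k - 1)) h
          simp only [Polynomial.coeff_C_mul, Polynomial.coeff_zero] at this
          have hl := hm.1.coeff_natDegree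
          rw [Polynomial.natDegree_eq_of_degree_eq_some hm.2] at hl
          rw [hl, mul_one] at this
          exact h2 this
        · refine (Polynomial.degree_mul_le _ _).trans_lt ?_
          rw [hm.2]
          refine (add_le_add_left Polynomial.degree_C_le _).trans_lt ?_
          rw [zero_add]
          exact_mod_cast (by omega : d k - 1 < d k)

/-- for an indecomposable partition `λ` (1-indexed: `λ_i ≥ i + 1` for all `i`;
0-indexed: `lam i ≥ i + 2`), the image of the variable `x_i` in `R^λ = ℤ[x]/I_λ` has
nilpotence order exactly `p = λ_i`: `x_i^p = 0` but `x_i^{p-1} ≠ 0`. -/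
theorem stmt11 (n : ℕ) (lam : Fin n → ℕ) (hmono : Monotone lam)
    (hind : ∀ j : Fin n, (j : ℕ) + 2 ≤ lam j) (i : Fin n)
    (I : Ideal (MvPolynomial (Fin n) ℤ))
    (hI : I = Ideal.span
      (Set.range fun j : Fin n => hh ℤ n (lam j - (j : ℕ)) (fv n ((j : ℕ) + 1)))) :
    (Ideal.Quotient.mk I (X i)) ^ (lam i) = 0 ∧
    (Ideal.Quotient.mk I (X i)) ^ (lam i - 1) ≠ 0 := by
  let d : ℕ → ℕ := fun k => if h : k < n then lam ⟨k, h⟩ - k else 2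
  have hdk : ∀ k (h : k < n), d k = lam ⟨k, h⟩ - k := fun k h => by simp [d, h]
  have hd2 : ∀ k, 2 ≤ d k := by
    intro k
    by_cases h : k < n
    · rw [hdk k h]; have := hind ⟨k, h⟩; simp only at this; omega
    · simp [d, h]
  have hdm : ∀ k, k + 1 < n → d k ≤ d (k+1) + 1 := by
    intro k hk
    rw [hdk k (by omega), hdk (k+1) hk]
    have : lam ⟨k, by omega⟩ ≤ lam ⟨k+1, hk⟩ := hmono (by simp)
    omega
  have hli : lam i = d i + i := by
    rw [hdk i i.2]; have := hind i; simp only [Fin.eta]; omega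
  have h2i := hd2 i
  have gen : ∀ (A : Type) [CommRing A] (x : ℕ → A), (∀ k < n, HC x (k+1) (d k) = 0) →
      x i ^ (lam i) = 0 ∧ x i ^ (lam i - 1) =
        (-1) ^ (i : ℕ) * ((∏ a ∈ range i, x a) * HC x (i+1) (d i - 1)) := by
    intro A _ x hx
    have hv := HC_vanish x d n hdm hx i i.2
    have ht := HP_top x i (d i - 1) (fun m hm => hv m (by omega)) i
    rw [← HP_pow, ← HP_pow]
    refine ⟨ht.1 _ (by omega), ?_⟩
    rw [← ht.2]
    congr 2; omega
  constructor
  · have := (gen (MvPolynomial (Fin n) ℤ ⧸ I)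
      (fun k => if h : k < n then Ideal.Quotient.mk I (X ⟨k, h⟩) else 0) ?_).1
    · simpa using this
    · intro k hk
      rw [← hh_aeval n (Ideal.Quotient.mk I) _ (by simp) (k+1) hk, Ideal.Quotient.eq_zero_iff_mem,
        hI, hdk k hk]
      exact Ideal.subset_span ⟨⟨k, hk⟩, rfl⟩
  · obtain ⟨A, _, x, h1, h2, h3⟩ := tower d hd2 n
    let f : MvPolynomial (Fin n) ℤ →+* A := (aeval (fun k : Fin n => x k)).toRingHom
    have hf : ∀ k : Fin n, f (X k) = x k := fun k => by simp [f]
    have hIf : I ≤ RingHom.ker f := by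
      rw [hI, Ideal.span_le]
      rintro _ ⟨k, rfl⟩
      have := hh_aeval n f x hf (k+1) k.2 (d k)
      rw [h1 k k.2, hdk k k.2] at this
      exact this
    intro h0
    rw [← map_pow, Ideal.Quotient.eq_zero_iff_mem] at h0
    have h4 : f (X i ^ (lam i - 1)) = 0 := hIf h0
    rw [map_pow, hf, (gen A x h1).2] at h4
    have hu : IsUnit ((-1 : A) ^ (i : ℕ)) := (isUnit_one.neg).pow _
    exact h3 i i.2 ((hu.mul_right_eq_zero).1 h4)
end

section
/- Let λ be an indecomposable partition with smallest part k = λ_1. Then no nonzero Z-linear form f = Σ a_i x_i in R^λ satisfies f^{k-1} = 0; consequently k is the minimal nilpotence order among nonzero degree-one elements of R^λ, and it is attained by x_1 (since x_1^k = h_k(x_1) ∈ I_λ). -/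
open MvPolynomial Finset

/-- Complete homogeneous sum of values. -/
def hsum {A : Type*} [CommRing A] {n : ℕ} (v : Fin n → A) (m : ℕ) (S : Finset (Fin n)) : A :=
  ∑ s ∈ S.sym m, ((s : Multiset (Fin n)).map v).prod

lemma hsum_rec {A : Type*} [CommRing A] {n : ℕ} (v : Fin n → A) (m : ℕ) (S : Finset (Fin n))
    (a : Fin n) (ha : a ∉ S) :
    hsum v (m+1) (insert a S) = hsum v (m+1) S + v a * hsum v m (insert a S) := by
  classical
  have h1 : (insert a S).sym (m+1) = S.sym (m+1) ∪ ((insert a S).sym m).image (Sym.cons a) := by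
    ext s
    simp only [Finset.mem_union, Finset.mem_image, Finset.mem_sym_iff, Finset.mem_insert]
    constructor
    · intro h
      by_cases hs : a ∈ s
      · right
        obtain ⟨t, rfl⟩ := Sym.exists_cons_of_mem hs
        exact ⟨t, fun x hx => h x (Sym.mem_cons_of_mem hx), rfl⟩
      · left
        intro x hx
        rcases h x hx with rfl | h
        · exact absurd hx hs
        · exact h
    · rintro (h | ⟨t, ht, rfl⟩)
      · intro x hx; exact Or.inr (h x hx)
      · intro x hx
        rcases Sym.mem_cons.1 hx with h | h
        · exact Or.inl h
        · exact ht x h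
  have h2 : Disjoint (S.sym (m+1)) (((insert a S).sym m).image (Sym.cons a)) := by
    rw [Finset.disjoint_left]
    intro s hs hs'
    obtain ⟨t, _, rfl⟩ := Finset.mem_image.1 hs'
    exact ha (Finset.mem_sym_iff.1 hs a (Sym.mem_cons_self a t))
  unfold hsum
  rw [h1, Finset.sum_union h2, Finset.sum_image (fun x _ y _ h => Sym.cons_inj_right a x y |>.1 h),
    Finset.mul_sum]
  refine congrArg _ (Finset.sum_congr rfl fun x _ => ?_)
  rw [Sym.coe_cons, Multiset.map_cons, Multiset.prod_cons]

lemma hsum_gen {n : ℕ} (v : Fin n → ℂ) (S : Finset (Fin n)) :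
    PowerSeries.mk (fun m => hsum v m S) *
      ((∏ i ∈ S, (1 - Polynomial.C (v i) * Polynomial.X) : Polynomial ℂ) : PowerSeries ℂ) = 1 := by
  classical
  induction S using Finset.induction_on with
  | empty =>
    ext m
    cases m
    · simp [hsum, PowerSeries.coeff_one]
      rfl
    · simp [hsum, PowerSeries.coeff_one]
  | insert a S ha ih =>
    rw [Finset.prod_insert ha, Polynomial.coe_mul, ← mul_assoc]
    rw [show PowerSeries.mk (fun m => hsum v m (insert a S)) *
      ((1 - Polynomial.C (v a) * Polynomial.X : Polynomial ℂ) : PowerSeries ℂ) =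
        PowerSeries.mk (fun m => hsum v m S) from ?_]
    · exact ih
    · rw [Polynomial.coe_sub, Polynomial.coe_mul, Polynomial.coe_C, Polynomial.coe_X,
        Polynomial.coe_one, mul_sub, mul_one]
      ext m
      cases m with
      | zero => simp [hsum]
      | succ m =>
        rw [map_sub, ← mul_assoc, PowerSeries.coeff_succ_mul_X, mul_comm, PowerSeries.coeff_C_mul]
        simp only [PowerSeries.coeff_mk]
        rw [hsum_rec v m S a ha]; ring

lemma prod_roots {k : ℕ} (hk : 0 < k) {ζ : ℂ} (hζ : IsPrimitiveRoot ζ k) :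
    (∏ r ∈ Polynomial.nthRootsFinset k (1:ℂ), (1 - Polynomial.C r * Polynomial.X) : Polynomial ℂ)
      = 1 - Polynomial.X ^ k := by
  apply Polynomial.funext
  intro x
  have := hζ.pow_sub_pow_eq_prod_sub_mul 1 x hk
  simp [Polynomial.eval_prod] at this ⊢
  exact this.symm

lemma hsum_zero {n k m : ℕ} (hk : 0 < k) {ζ : ℂ} (hζ : IsPrimitiveRoot ζ k) (v : Fin n → ℂ)
    (S : Finset (Fin n)) (h1 : ∀ i, v i ≠ 0 → v i ^ k = 1)
    (h2 : ∀ i j, v i ≠ 0 → v i = v j → i = j) (hm : m < k)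
    (hp : k < m + (S.filter (fun i => v i ≠ 0)).card) : hsum v m S = 0 := by
  classical
  set S' := S.filter (fun i => v i ≠ 0) with hS'
  set Z := Polynomial.nthRootsFinset k (1:ℂ) with hZ
  have hinj : Set.InjOn v S' := by
    intro i hi j hj h
    exact h2 i j (Finset.mem_filter.1 hi).2 h
  have hsub : S'.image v ⊆ Z := by
    intro x hx
    obtain ⟨i, hi, rfl⟩ := Finset.mem_image.1 hx
    rw [hZ, Polynomial.mem_nthRootsFinset hk]
    exact h1 i (Finset.mem_filter.1 hi).2
  set Q : Polynomial ℂ := ∏ r ∈ Z \ S'.image v, (1 - Polynomial.C r * Polynomial.X) with hQ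
  have hP : (∏ i ∈ S, (1 - Polynomial.C (v i) * Polynomial.X) : Polynomial ℂ) =
      ∏ r ∈ S'.image v, (1 - Polynomial.C r * Polynomial.X) := by
    rw [Finset.prod_image hinj, hS', Finset.prod_filter]
    refine Finset.prod_congr rfl fun i _ => ?_
    by_cases h : v i = 0 <;> simp [h]
  have hPQ : Q * (∏ i ∈ S, (1 - Polynomial.C (v i) * Polynomial.X) : Polynomial ℂ) =
      1 - Polynomial.X ^ k := by
    rw [hP, hQ, Finset.prod_sdiff hsub, prod_roots hk hζ]
  have hdeg : Q.natDegree ≤ k - S'.card := by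
    refine (Polynomial.natDegree_prod_le _ _).trans ?_
    refine (Finset.sum_le_card_nsmul _ _ 1 ?_).trans ?_
    · intro r _
      compute_degree
    · rw [Finset.card_sdiff_of_subset hsub, Finset.card_image_of_injOn hinj, hZ,
        hζ.card_nthRootsFinset]
      simp
  have hcard : S'.card ≤ k := by
    have := Finset.card_le_card hsub
    rwa [Finset.card_image_of_injOn hinj, hZ, hζ.card_nthRootsFinset] at this
  have hg := hsum_gen v S
  have key : PowerSeries.mk (fun m => hsum v m S) * ((1 - Polynomial.X ^ k : Polynomial ℂ) : PowerSeries ℂ) = (Q : PowerSeries ℂ) := by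
    rw [← hPQ, Polynomial.coe_mul, mul_left_comm, hg, mul_one]
  have := congrArg (PowerSeries.coeff m) key
  rw [Polynomial.coeff_coe, Polynomial.coeff_eq_zero_of_natDegree_lt (by omega), Polynomial.coe_sub,
    Polynomial.coe_pow, Polynomial.coe_X, Polynomial.coe_one, mul_sub, mul_one, map_sub,
    PowerSeries.coeff_mul_X_pow', if_neg (by omega)] at this
  simpa using this

lemma eval_zero (n : ℕ) (hn : 1 ≤ n) (lam : Fin n → ℕ) (hmono : Monotone lam)
    (hind : ∀ j : Fin n, (j : ℕ) + 2 ≤ lam j)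
    (I : Ideal (MvPolynomial (Fin n) ℤ))
    (hI : I = Ideal.span
      (Set.range fun j : Fin n => hh ℤ n (lam j - (j : ℕ)) (fv n ((j : ℕ) + 1))))
    {ζ : ℂ} (hζ : IsPrimitiveRoot ζ (lam ⟨0, hn⟩)) (v : Fin n → ℂ)
    (h0 : ∀ i : Fin n, (i : ℕ) < lam ⟨0, hn⟩ - 1 → v i ≠ 0)
    (h1 : ∀ i, v i ≠ 0 → v i ^ (lam ⟨0, hn⟩) = 1)
    (h2 : ∀ i j, v i ≠ 0 → v i = v j → i = j) (a : Fin n → ℤ)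
    (ha : (∑ i, C (a i) * X i : MvPolynomial (Fin n) ℤ) ^ (lam ⟨0, hn⟩ - 1) ∈ I) :
    ∑ i, (a i : ℂ) * v i = 0 := by
  have hk2 : 2 ≤ lam ⟨0, hn⟩ := by simpa using hind ⟨0, hn⟩
  have hkle : ∀ j, lam ⟨0, hn⟩ ≤ lam j := fun j => hmono (Fin.mk_le_of_le_val (Nat.zero_le _))
  set k := lam ⟨0, hn⟩ with hkdef
  let Φ : MvPolynomial (Fin n) ℤ →ₐ[ℤ] Polynomial ℂ :=
    aeval (fun i => Polynomial.C (v i) * Polynomial.X)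
  have hΦ : ∀ m S, Φ (hh ℤ n m S) = Polynomial.C (hsum v m S) * Polynomial.X ^ m := by
    intro m S
    unfold hh hsum
    rw [map_sum, map_sum, Finset.sum_mul]
    refine Finset.sum_congr rfl fun s _ => ?_
    rw [map_multiset_prod, map_multiset_prod, Multiset.map_map, Multiset.map_map]
    simp only [Function.comp_def, Φ, aeval_X]
    rw [Multiset.prod_map_mul]
    simp
  have hle : I ≤ (Ideal.span {(Polynomial.X : Polynomial ℂ) ^ k}).comap Φ := by
    rw [hI, Ideal.span_le]
    rintro _ ⟨j, rfl⟩
    simp only [SetLike.mem_coe, Ideal.mem_comap]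
    rw [hΦ, Ideal.mem_span_singleton]
    by_cases hm : lam j - (j:ℕ) < k
    · rw [hsum_zero (by omega) hζ v _ h1 h2 hm]
      · simp
      · have hsub : fv n (min ((j:ℕ)+1) (k-1)) ⊆ (fv n ((j:ℕ)+1)).filter (fun i => v i ≠ 0) := by
          intro i hi
          simp only [fv, Finset.mem_filter, Finset.mem_univ, true_and] at hi ⊢
          exact ⟨by omega, h0 i (by omega)⟩
        have hc := Finset.card_le_card hsub
        have hc2 : (fv n (min ((j:ℕ)+1) (k-1))).card = min ((j:ℕ)+1) (k-1) := by
          unfold fv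
          rw [Fin.card_filter_val_lt]
          have := j.2
          omega
        have := hind j
        have := hkle j
        omega
    · exact Dvd.dvd.mul_left (pow_dvd_pow _ (by omega)) _
  have hmem := hle ha
  rw [Ideal.mem_comap, Ideal.mem_span_singleton, map_pow] at hmem
  have hf : Φ (∑ i, C (a i) * X i) = Polynomial.C (∑ i, (a i : ℂ) * v i) * Polynomial.X := by
    rw [map_sum, map_sum, Finset.sum_mul]
    refine Finset.sum_congr rfl fun i _ => ?_
    simp [Φ, mul_assoc]
  rw [hf, mul_pow, ← Polynomial.C_pow, Polynomial.X_pow_dvd_iff] at hmem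
  have := hmem (k-1) (by omega)
  rw [Polynomial.coeff_C_mul_X_pow, if_pos rfl] at this
  exact eq_zero_of_pow_eq_zero this

/-- for an indecomposable partition `λ` (1-indexed `λ_i > i`, 0-indexed
`lam i ≥ i + 2`) with smallest part `k = λ_1`, no nonzero linear form `f = Σ aᵢ xᵢ` in
`R^λ` satisfies `f^{k-1} = 0`; and the minimal nilpotence order `k` is attained by `x_1`,
since `x_1^k = h_k(x_1) ∈ I_λ`. -/
theorem stmt15 (n : ℕ) (hn : 1 ≤ n) (lam : Fin n → ℕ) (hmono : Monotone lam)
    (hind : ∀ j : Fin n, (j : ℕ) + 2 ≤ lam j)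
    (I : Ideal (MvPolynomial (Fin n) ℤ))
    (hI : I = Ideal.span
      (Set.range fun j : Fin n => hh ℤ n (lam j - (j : ℕ)) (fv n ((j : ℕ) + 1)))) :
    (∀ a : Fin n → ℤ,
      (Ideal.Quotient.mk I (∑ i, C (a i) * X i)) ^ (lam ⟨0, hn⟩ - 1) = 0 →
      Ideal.Quotient.mk I (∑ i, C (a i) * X i) = 0) ∧
    (Ideal.Quotient.mk I (X ⟨0, hn⟩)) ^ (lam ⟨0, hn⟩) = 0 := by
  constructor
  · intro a ha
    rw [← map_pow, Ideal.Quotient.eq_zero_iff_mem] at ha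
    have hk2 : 2 ≤ lam ⟨0, hn⟩ := by simpa using hind ⟨0, hn⟩
    have hE := fun {ζ : ℂ} (hζ : IsPrimitiveRoot ζ (lam ⟨0, hn⟩)) v h0 h1 h2 =>
      eval_zero n hn lam hmono hind I hI hζ v h0 h1 h2 a ha
    set k := lam ⟨0, hn⟩ with hk
    have hζ := Complex.isPrimitiveRoot_exp k (by omega)
    set ζ := Complex.exp (2 * Real.pi * Complex.I / k) with hζdef
    have hz : ζ ≠ 0 := hζ.ne_zero (by omega)
    have hzk : ∀ l : ℕ, (ζ ^ l) ^ k = 1 := by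
      intro l
      rw [← pow_mul, mul_comm, pow_mul, hζ.pow_eq_one, one_pow]
    have hzi : ∀ p q : ℕ, p < k → q < k → ζ ^ p = ζ ^ q → p = q :=
      fun p q hp hq h => hζ.pow_inj hp hq h
    have hzn : ∀ l : ℕ, ζ ^ l ≠ 0 := fun l => pow_ne_zero l hz
    let c : Fin n → ℂ := fun l => if (l:ℕ) < k - 1 then ζ ^ (l:ℕ) else 0
    have hc : ∑ i, (a i : ℂ) * c i = 0 := by
      apply hE hζ c
      · intro i hi
        simp [c, hi, hz]
      · intro i hi
        by_cases h : (i:ℕ) < k - 1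
        · simp only [c, if_pos h, hzk]
        · simp [c, h] at hi
      · intro i j hi hij
        by_cases h : (i:ℕ) < k - 1
        · by_cases h' : (j:ℕ) < k - 1
          · simp only [c, if_pos h, if_pos h'] at hij
            exact Fin.ext (hzi _ _ (by omega) (by omega) hij)
          · simp only [c, if_pos h, if_neg h'] at hij
            exact absurd hij (hzn _)
        · simp [c, h] at hi
    have hai : ∀ i, a i = 0 := by
      intro i
      have hc' : ∑ l, (a l : ℂ) * (if l = i then ζ ^ (k-1) else c l) = 0 := by
        apply hE hζ
        · intro l hl
          by_cases h : l = i
          · simp [h, hz]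
          · simp [h, c, hl, hz]
        · intro l hl
          by_cases h : l = i
          · simp only [if_pos h, hzk]
          · simp only [if_neg h] at hl ⊢
            by_cases h : (l:ℕ) < k - 1
            · simp only [c, if_pos h, hzk]
            · simp [c, h] at hl
        · intro p q hp hpq
          have hcc : ∀ l, ζ ^ (k-1) ≠ c l := by
            intro l h
            by_cases h' : (l:ℕ) < k - 1
            · simp only [c, if_pos h'] at h
              have := hzi _ _ (by omega) (by omega) h
              omega
            · simp only [c, if_neg h'] at h
              exact hzn _ h
          by_cases h1 : p = i <;> by_cases h2 : q = i
          · rw [h1, h2]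
          · simp only [if_pos h1, if_neg h2] at hpq
            exact absurd hpq (hcc q)
          · simp only [if_neg h1, if_pos h2] at hpq
            exact absurd hpq.symm (hcc p)
          · simp only [if_neg h1, if_neg h2] at hpq hp
            by_cases h : (p:ℕ) < k - 1
            · by_cases h' : (q:ℕ) < k - 1
              · simp only [c, if_pos h, if_pos h'] at hpq
                exact Fin.ext (hzi _ _ (by omega) (by omega) hpq)
              · simp only [c, if_pos h, if_neg h'] at hpq
                exact absurd hpq (hzn _)
            · simp [c, h] at hp
      have hd : ∑ l, ((a l : ℂ) * (if l = i then ζ ^ (k-1) else c l) - (a l : ℂ) * c l) = 0 := by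
        rw [Finset.sum_sub_distrib, hc', hc, sub_zero]
      rw [Finset.sum_eq_single i (by intro b _ hb; simp [hb]) (by simp)] at hd
      rw [if_pos rfl, ← mul_sub] at hd
      rcases mul_eq_zero.1 hd with h | h
      · exact_mod_cast h
      · exfalso
        rw [sub_eq_zero] at h
        by_cases h' : (i:ℕ) < k - 1
        · simp only [c, if_pos h'] at h
          have := hzi _ _ (by omega) (by omega) h
          omega
        · simp only [c, if_neg h'] at h
          exact hzn _ h
    simp [hai]
  · rw [← map_pow, Ideal.Quotient.eq_zero_iff_mem, hI]
    apply Ideal.subset_span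
    refine ⟨⟨0, hn⟩, ?_⟩
    have : fv n 1 = {⟨0, hn⟩} := by
      ext i
      simp [fv, Fin.ext_iff]
    simp [hh, this, Finset.sym_singleton]
    rw [Sym.coe_replicate, Multiset.map_replicate, Multiset.prod_replicate]
end
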